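/- Fix an integer N ≥ 0 and scalars D_0, …, D_{N−1} ∈ K. With the modes and conventions of the context (untwisted bosons b_k, k ∈ ℤ, with zero mode b_0 = √ℏ ∂_{x^0}, and untwisted Neveu–Schwarz fermions ψ_r, r ∈ ℤ+1/2), define for i ∈ ℤ_{≥0}: H_i = ℏ ∂_{x^i} + (ℏ/2) Σ_{k∈ℤ} :b_k b_{i+N−1−k}: + (ℏ/2) Σ_{r∈ℤ+1/2} (r + (i+N−1)/2) :ψ_{−r} ψ_{i+N−1+r}: + ℏ D_i [i ≤ N−1], and for r ∈ ℤ_{≥0} + 1/2: F_r = ℏ ∂_{θ^{r+1/2}} + ℏ Σ_{m∈ℤ} ψ_{r+N−1−m} b_m. Then these operators form a representation of a subalgebra of the N=1 super Virasoro algebra in the Neveu–Schwarz sector: for all i, j ∈ ℤ_{≥0} and r, s ∈ ℤ_{≥0}+1/2, [H_i, H_j] = ℏ (i−j) H_{i+j+N−1}, [H_i, F_r] = ℏ ((i−N+1)/2 − r) F_{i+r+N−1}, and {F_r, F_s} = 2ℏ H_{r+s+N−1}; in each relation, whenever the subscript on the right-hand side lies outside the allowed index range the corresponding scalar coefficient vanishes,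 so the relation is read with right-hand side 0. -/

import Mathlib

/-!
Statement 7: the untwisted free boson–fermion representation of a subalgebra of the N=1
super Virasoro algebra in the Neveu–Schwarz sector. Bosons `b_k`, `k ∈ ℤ`, act on
`P = K[t,t⁻¹][x⁰,x¹,…]` (with `ℏ = t²`, `√ℏ = t`), Neveu–Schwarz fermions `ψ_r`,
`r ∈ ℤ+1/2`, act on `Λ(θ¹,θ²,…)`; a fermionic index `r = n + 1/2 ∈ ℤ + 1/2` is
parametrised by `n ∈ ℤ` throughout.
-/

set_option synthInstance.maxHeartbeats 1000000
set_option maxHeartbeats 1000000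

noncomputable section
open TensorProduct

variable (K : Type) [Field K] [CharZero K]

/-- `R = K[t,t⁻¹]`, with `ℏ = t²`, `√ℏ = t`. -/
abbrev R := LaurentPolynomial K
/-- `ℏ = t² ∈ R`. -/
def hb : R K := LaurentPolynomial.T 2
/-- A scalar `c : K` viewed in `R`. -/
def cs (c : K) : R K := LaurentPolynomial.C c
/-- The even part `P = R[x⁰,x¹,x²,…]`. -/
abbrev Pev := MvPolynomial ℕ (R K)
/-- The odd part `Λ(θ¹,θ²,…)`; generators are indexed by `ℕ+`. -/
abbrev Podd := ExteriorAlgebra (R K) (ℕ+ →₀ R K)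
/-- The full carrier `S = P ⊗_R Λ`. -/
abbrev SuperSpace := Pev K ⊗[R K] Podd K

/-- `∂_{x^a}`, acting through the polynomial factor. -/
def dX (a : ℕ) : SuperSpace K → SuperSpace K :=
  LinearMap.rTensor (Podd K) (MvPolynomial.pderiv a).toLinearMap

/-- Multiplication by `x^a`, acting through the polynomial factor. -/
def mX (a : ℕ) : SuperSpace K → SuperSpace K :=
  LinearMap.rTensor (Podd K) (LinearMap.mulLeft (R K) (MvPolynomial.X a))

/-- `∂_{θ^a}` (interior product with the dual basis vector), acting through the odd factor. -/
def dT (a : ℕ+) : SuperSpace K → SuperSpace K :=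
  LinearMap.lTensor (Pev K) (CliffordAlgebra.contractLeft (Finsupp.lapply a))

/-- Left multiplication by `θ^a`, acting through the odd factor. -/
def mT (a : ℕ+) : SuperSpace K → SuperSpace K :=
  LinearMap.lTensor (Pev K)
    (LinearMap.mulLeft (R K) (ExteriorAlgebra.ι (R K) (Finsupp.single a 1)))

/-- `∂_{x^a}` for `a ∈ ℤ`, vanishing for `a < 0`. -/
def dXi (a : ℤ) : SuperSpace K → SuperSpace K :=
  fun v => if 0 ≤ a then dX K a.toNat v else 0

/-- `∂_{θ^a}` for `a ∈ ℤ`, vanishing for `a < 1`. -/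
def dTi (a : ℤ) : SuperSpace K → SuperSpace K :=
  fun v => if h : 1 ≤ a then dT K ⟨a.toNat, by omega⟩ v else 0

/-- The untwisted boson mode `b_k`: `b_k = √ℏ ∂_{x^k}` for `k ≥ 0`,
`b_{−k} = (k/√ℏ) x^k` for `k ≥ 1`. -/
def bos (k : ℤ) : SuperSpace K → SuperSpace K :=
  if 0 ≤ k then fun v => (LaurentPolynomial.T 1 : R K) • dX K k.toNat v
  else fun v => (((-k : ℤ) : R K) * LaurentPolynomial.T (-1)) • mX K (-k).toNat v

/-- The untwisted Neveu–Schwarz fermion mode `ψ_{n+1/2}`: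
`ψ_r = √ℏ ∂_{θ^{r+1/2}}` and `ψ_{−r} = (1/√ℏ) θ^{r+1/2}` for `r ∈ ℤ_{≥0}+1/2`. -/
def fer (n : ℤ) : SuperSpace K → SuperSpace K :=
  if h : 0 ≤ n then fun v => (LaurentPolynomial.T 1 : R K) • dT K ⟨(n + 1).toNat, by omega⟩ v
  else fun v => (LaurentPolynomial.T (-1) : R K) • mT K ⟨(-n).toNat, by omega⟩ v

/-- The normally ordered boson bilinear `:b_α b_β:`. -/
def nb (α β : ℤ) : SuperSpace K → SuperSpace K :=
  if α ≤ β then fun v => bos K α (bos K β v) else fun v => bos K β (bos K α v)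

/-- The normally ordered fermion bilinear `:ψ_{n+1/2} ψ_{m+1/2}:` (indices parametrised by
the integers `n`, `m`). -/
def nf (n m : ℤ) : SuperSpace K → SuperSpace K :=
  if n ≤ m then fun v => fer K n (fer K m v) else fun v => -(fer K m (fer K n v))

/-- `H_i = ℏ ∂_{x^i} + (ℏ/2) Σ_{k∈ℤ} :b_k b_{i+N−1−k}:
        + (ℏ/2) Σ_{r∈ℤ+1/2} (r + (i+N−1)/2) :ψ_{−r} ψ_{i+N−1+r}: + ℏ D_i [i ≤ N−1]`,
with the fermionic sum parametrised by `r = n + 1/2`, `n ∈ ℤ`, so that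
`r + (i+N−1)/2 = (2n+i+N)/2`, `ψ_{−r} = ψ` with parameter `−n−1` and `ψ_{i+N−1+r} = ψ`
with parameter `i+N−1+n`. -/
def Hop (N : ℤ) (D : ℤ → K) (i : ℤ) : SuperSpace K → SuperSpace K := fun v =>
  hb K • dXi K i v
    + (cs K (2 : K)⁻¹ * hb K) • (∑ᶠ k : ℤ, nb K k (i + N - 1 - k) v)
    + (cs K (2 : K)⁻¹ * hb K) •
        (∑ᶠ n : ℤ, (((2 * n + i + N : ℤ) : R K) * cs K (2 : K)⁻¹) •
          nf K (-n - 1) (i + N - 1 + n) v)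
    + (if i ≤ N - 1 then (hb K * cs K (D i)) • v else 0)

/-- `F_{n+1/2} = ℏ ∂_{θ^{n+1}} + ℏ Σ_{m∈ℤ} ψ_{n+1/2+N−1−m} b_m`. -/
def Fop (N : ℤ) (n : ℤ) : SuperSpace K → SuperSpace K := fun v =>
  hb K • dTi K (n + 1) v + hb K • (∑ᶠ m : ℤ, fer K (n + N - 1 - m) (bos K m v))

/-!
On a Fock module an operator is determined by its value on the vacuum and its supercommutators with
the generators, the coordinates `x^a` and the fermion modes. The free-field operators `L_m` and
`G_r` are quadratic, so their supercommutators with the generators are linear in the modes, and the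
super Jacobi identity reduces each relation between them to a comparison of scalar coefficients. The
modes occurring in the theorem, `m ≥ -1` and `r ≥ -1/2`, annihilate the vacuum, which is why no
central term appears.

Since `ℏ ∂_{x^i} = ℏ t⁻¹ b_i` and `ℏ ∂_{θ^{r+1/2}} = ℏ t⁻¹ ψ_r`, the operators `H_i` and `F_r` are,
up to additive constants, `ℏ` times `L_{i+N-1}` and `G_{r+N-1}` after the shift
`b_{N-1} ↦ b_{N-1} + t⁻¹`. The shift preserves the relations, and on a right-hand side the additive
constant is zero or is multiplied by zero.
-/

attribute [local instance] LieRing.ofAssociativeRing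

section SuperJacobi

variable {S : Type*} [Ring S]

/-- The anticommutator `{x, y} = x y + y x`, i.e. the supercommutator of two odd elements. -/
def anticommutator (x y : S) : S := x * y + y * x

theorem anticommutator_comm (x y : S) : anticommutator x y = anticommutator y x :=
  add_comm _ _

theorem anticommutator_add (x y z : S) :
    anticommutator x (y + z) = anticommutator x y + anticommutator x z := by
  simp only [anticommutator]; noncomm_ring

theorem add_anticommutator (x y z : S) :
    anticommutator (x + y) z = anticommutator x z + anticommutator y z := by
  simp only [anticommutator]; noncomm_ring

theorem anticommutator_smul {A : Type*} [CommRing A] [Algebra A S] (c : A) (x y : S) :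
    anticommutator x (c • y) = c • anticommutator x y := by
  simp only [anticommutator, mul_smul_comm, smul_mul_assoc, smul_add]

theorem smul_anticommutator {A : Type*} [CommRing A] [Algebra A S] (c : A) (x y : S) :
    anticommutator (c • x) y = c • anticommutator x y := by
  simp only [anticommutator, mul_smul_comm, smul_mul_assoc, smul_add]

theorem mul_lie_eq_mul_lie_add_lie_mul (x y z : S) : ⁅x * y, z⁆ = x * ⁅y, z⁆ + ⁅x, z⁆ * y := by
  simp only [Ring.lie_def]; noncomm_ring

theorem mul_lie_eq_mul_anticommutator_sub (x y z : S) :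
    ⁅x * y, z⁆ = x * anticommutator y z - anticommutator x z * y := by
  simp only [Ring.lie_def, anticommutator]; noncomm_ring

theorem mul_anticommutator (x y z : S) :
    anticommutator (x * y) z = x * ⁅y, z⁆ + anticommutator x z * y := by
  simp only [Ring.lie_def, anticommutator]; noncomm_ring

theorem lie_anticommutator (x y z : S) :
    anticommutator ⁅x, y⁆ z = ⁅x, anticommutator y z⁆ - anticommutator y ⁅x, z⁆ := by
  simp only [Ring.lie_def, anticommutator]; noncomm_ring

theorem anticommutator_lie_eq_add_anticommutator (x y z : S) :
    ⁅anticommutator x y, z⁆ = anticommutator x ⁅y, z⁆ + anticommutator y ⁅x, z⁆ := by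
  simp only [Ring.lie_def, anticommutator]; noncomm_ring

theorem anticommutator_lie_eq_add_lie (x y z : S) :
    ⁅anticommutator x y, z⁆ = ⁅x, anticommutator y z⁆ + ⁅y, anticommutator x z⁆ := by
  simp only [Ring.lie_def, anticommutator]; noncomm_ring

theorem one_lie_eq_zero (x : S) : ⁅(1 : S), x⁆ = 0 :=
  (Commute.one_left x).lie_eq

theorem lie_one_eq_zero (x : S) : ⁅x, (1 : S)⁆ = 0 :=
  (Commute.one_right x).lie_eq

end SuperJacobi

section PointwiseFiniteSum

variable {ι A V : Type*} [CommRing A] [AddCommGroup V] [Module A V]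

/-- A family of operators only finitely many members of which act nontrivially on any given
vector; such a family has a sum even though it may have infinite support. -/
def IsPointwiseFinite (g : ι → Module.End A V) : Prop :=
  ∀ v, Function.HasFiniteSupport fun k => g k v

/-- The operator `v ↦ ∑ₖ gₖ v` attached to a pointwise finite family `g`. -/
def pointwiseSum (g : ι → Module.End A V) (hg : IsPointwiseFinite g) : Module.End A V where
  toFun v := ∑ᶠ k, g k v
  map_add' v w := by
    simp only [map_add]
    exact finsum_add_distrib (hg v) (hg w)
  map_smul' a v := by
    simp only [map_smul, RingHom.id_apply]
    exact (smul_finsum' a (hg v)).symm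

variable {g : ι → Module.End A V} (hg : IsPointwiseFinite g)

theorem pointwiseSum_apply (v : V) : pointwiseSum g hg v = ∑ᶠ k, g k v := rfl

theorem apply_pointwiseSum (Y : Module.End A V) (v : V) :
    Y (pointwiseSum g hg v) = ∑ᶠ k, Y (g k v) :=
  Y.toAddMonoidHom.map_finsum (hg v)

theorem pointwiseSum_apply_eq_zero {v : V} (h : ∀ k, g k v = 0) : pointwiseSum g hg v = 0 :=
  finsum_eq_zero_of_forall_eq_zero h

theorem pointwiseSum_lie (Y : Module.End A V) (s : Finset ι) (hs : ∀ k ∉ s, ⁅g k, Y⁆ = 0) :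
    ⁅pointwiseSum g hg, Y⁆ = ∑ k ∈ s, ⁅g k, Y⁆ := by
  ext v
  have hY : Function.HasFiniteSupport fun k => Y (g k v) := (hg v).fun_comp (map_zero Y)
  rw [Ring.lie_def, LinearMap.sub_apply, Module.End.mul_apply, Module.End.mul_apply,
    pointwiseSum_apply, apply_pointwiseSum, ← finsum_sub_distrib (hg (Y v)) hY,
    LinearMap.sum_apply]
  refine finsum_eq_sum_of_support_subset _ fun k hk => ?_
  by_contra hks
  exact hk (congrArg (· v) (hs k hks))

theorem anticommutator_pointwiseSum (Y : Module.End A V) (s : Finset ι)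
    (hs : ∀ k ∉ s, anticommutator (g k) Y = 0) :
    anticommutator (pointwiseSum g hg) Y = ∑ k ∈ s, anticommutator (g k) Y := by
  ext v
  have hY : Function.HasFiniteSupport fun k => Y (g k v) := (hg v).fun_comp (map_zero Y)
  rw [anticommutator, LinearMap.add_apply, Module.End.mul_apply, Module.End.mul_apply,
    pointwiseSum_apply, apply_pointwiseSum, ← finsum_add_distrib (hg (Y v)) hY,
    LinearMap.sum_apply]
  refine finsum_eq_sum_of_support_subset _ fun k hk => ?_
  by_contra hks
  exact hk (congrArg (· v) (hs k hks))

end PointwiseFiniteSum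

/-- A module over the Heisenberg–Clifford algebra of the modes `b_k` (`k ∈ ℤ`) and
`ψ_{n+1/2}` (`n ∈ ℤ`) which is generated from a vacuum by operators `x_a` canonically conjugate to
the `b_a`, `a ≥ 0`, and by the fermionic creation modes. The creation modes `b_{-a}` are not
taken as generators: the zero mode `b_0` has no partner among them, and `b_{-a}` generates as
much as `x_a` only where `a` is invertible. -/
structure FockModule (A V : Type*) [CommRing A] [AddCommGroup V] [Module A V] where
  boson : ℤ → Module.End A V
  fermion : ℤ → Module.End A V
  coord : ℕ → Module.End A V
  sqrtHbar : A
  vac : V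
  lie_boson_boson : ∀ m n, ⁅boson m, boson n⁆ = if m + n = 0 then (m : A) • 1 else 0
  anticommutator_fermion_fermion :
    ∀ m n, anticommutator (fermion m) (fermion n) = if m + n + 1 = 0 then 1 else 0
  lie_boson_fermion : ∀ m n, ⁅boson m, fermion n⁆ = 0
  lie_boson_coord : ∀ m (a : ℕ), ⁅boson m, coord a⁆ = if m = a then sqrtHbar • 1 else 0
  lie_fermion_coord : ∀ m a, ⁅fermion m, coord a⁆ = 0
  boson_vac : ∀ m, 0 ≤ m → boson m vac = 0
  fermion_vac : ∀ m, 0 ≤ m → fermion m vac = 0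
  eq_top_of_vac_mem : ∀ W : Submodule A V, vac ∈ W → (∀ a, ∀ v ∈ W, coord a v ∈ W) →
    (∀ k < 0, ∀ v ∈ W, fermion k v ∈ W) → W = ⊤

namespace FockModule

variable {A V : Type*} [CommRing A] [AddCommGroup V] [Module A V] (F : FockModule A V)

section Extensionality

theorem ext_of_lie {X Y : Module.End A V} (hvac : X F.vac = Y F.vac)
    (hcoord : ∀ a, ⁅X, F.coord a⁆ = ⁅Y, F.coord a⁆)
    (hfermion : ∀ k, ⁅X, F.fermion k⁆ = ⁅Y, F.fermion k⁆) : X = Y := by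
  have invariant {Z : Module.End A V} (hZ : ⁅X, Z⁆ = ⁅Y, Z⁆) (v : V) (hv : X v = Y v) :
      X (Z v) = Y (Z v) := by
    simpa [Ring.lie_def, hv] using LinearMap.congr_fun hZ v
  exact LinearMap.eqLocus_eq_top.1 <| F.eq_top_of_vac_mem _ hvac
    (fun a => invariant (hcoord a)) (fun k _ => invariant (hfermion k))

theorem ext_of_anticommutator {X Y : Module.End A V} (hvac : X F.vac = Y F.vac)
    (hcoord : ∀ a, ⁅X, F.coord a⁆ = ⁅Y, F.coord a⁆)
    (hfermion : ∀ k, anticommutator X (F.fermion k) = anticommutator Y (F.fermion k)) :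
    X = Y := by
  refine LinearMap.eqLocus_eq_top.1 <| F.eq_top_of_vac_mem _ hvac (fun a v hv => ?_)
    (fun k _ v hv => ?_)
  · have hv : X v = Y v := hv
    simpa [Ring.lie_def, hv] using LinearMap.congr_fun (hcoord a) v
  · have hv : X v = Y v := hv
    simpa [anticommutator, hv] using LinearMap.congr_fun (hfermion k) v

end Extensionality

section LocalFiniteness

open Filter

theorem fermion_boson_comm (m n : ℤ) (v : V) :
    F.fermion m (F.boson n v) = F.boson n (F.fermion m v) :=
  (sub_eq_zero.1 (LinearMap.congr_fun (F.lie_boson_fermion n m) v)).symm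

theorem eventually_annihilate (v : V) :
    ∀ᶠ k in atTop, F.boson k v = 0 ∧ F.fermion k v = 0 := by
  let W : Submodule A V :=
    { carrier := {v | ∀ᶠ k in atTop, F.boson k v = 0 ∧ F.fermion k v = 0}
      zero_mem' := by simp
      add_mem' := fun hv hw => by
        filter_upwards [hv, hw] with k hvk hwk
        simp [hvk, hwk]
      smul_mem' := fun c v hv => by
        filter_upwards [hv] with k hvk
        simp [hvk] }
  suffices h : W = ⊤ from h.ge Submodule.mem_top
  refine F.eq_top_of_vac_mem W ?_ (fun a v hv => ?_) (fun j _ v hv => ?_)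
  · filter_upwards [eventually_ge_atTop 0] with k hk
    exact ⟨F.boson_vac k hk, F.fermion_vac k hk⟩
  · filter_upwards [hv, eventually_gt_atTop (a : ℤ)] with k hvk hk
    have hb := LinearMap.congr_fun (F.lie_boson_coord k a) v
    have hf := LinearMap.congr_fun (F.lie_fermion_coord k a) v
    rw [if_neg hk.ne'] at hb
    simpa [Ring.lie_def, hvk] using And.intro hb hf
  · filter_upwards [hv, eventually_gt_atTop (-j)] with k hvk hk
    have hf := LinearMap.congr_fun (F.anticommutator_fermion_fermion k j) v
    rw [if_neg (by omega)] at hf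
    refine ⟨by rw [← F.fermion_boson_comm, hvk.1, map_zero], ?_⟩
    simpa [anticommutator, hvk] using hf

theorem exists_forall_ge_annihilate (v : V) :
    ∃ M : ℤ, ∀ k ≥ M, F.boson k v = 0 ∧ F.fermion k v = 0 :=
  eventually_atTop.1 (F.eventually_annihilate v)

end LocalFiniteness

section NormalOrdering

/-- The normally ordered product `:b_k b_l:`. -/
def bosonBilinear (k l : ℤ) : Module.End A V :=
  if k ≤ l then F.boson k * F.boson l else F.boson l * F.boson k

/-- The normally ordered product `:ψ_{k+1/2} ψ_{l+1/2}:`. -/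
def fermionBilinear (k l : ℤ) : Module.End A V :=
  if k ≤ l then F.fermion k * F.fermion l else -(F.fermion l * F.fermion k)

theorem bosonBilinear_apply (k l : ℤ) (v : V) :
    F.bosonBilinear k l v =
      if k ≤ l then F.boson k (F.boson l v) else F.boson l (F.boson k v) := by
  unfold bosonBilinear
  split_ifs <;> rfl

theorem fermionBilinear_apply (k l : ℤ) (v : V) :
    F.fermionBilinear k l v =
      if k ≤ l then F.fermion k (F.fermion l v) else -F.fermion l (F.fermion k v) := by
  unfold fermionBilinear
  split_ifs <;> rfl

theorem bosonBilinear_apply_eq_zero {k l : ℤ} {v : V} (h : F.boson (max k l) v = 0) :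
    F.bosonBilinear k l v = 0 := by
  rw [bosonBilinear_apply]
  split_ifs with hkl
  · rw [← max_eq_right hkl, h, map_zero]
  · rw [← max_eq_left (not_le.1 hkl).le, h, map_zero]

theorem fermionBilinear_apply_eq_zero {k l : ℤ} {v : V} (h : F.fermion (max k l) v = 0) :
    F.fermionBilinear k l v = 0 := by
  rw [fermionBilinear_apply]
  split_ifs with hkl
  · rw [← max_eq_right hkl, h, map_zero]
  · rw [← max_eq_left (not_le.1 hkl).le, h, map_zero, neg_zero]

theorem fermion_boson_apply_eq_zero {k l : ℤ} {v : V}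
    (h : F.fermion k v = 0 ∨ F.boson l v = 0) : F.fermion k (F.boson l v) = 0 := by
  rcases h with h | h
  · rw [F.fermion_boson_comm, h, map_zero]
  · rw [h, map_zero]

theorem isPointwiseFinite_bosonBilinear (m : ℤ) :
    IsPointwiseFinite fun k => F.bosonBilinear k (m - k) := by
  intro v
  obtain ⟨M, hM⟩ := F.exists_forall_ge_annihilate v
  refine (Set.finite_Icc (m - M) M).subset (Function.support_subset_iff'.2 fun k hk => ?_)
  rw [Set.mem_Icc] at hk
  exact F.bosonBilinear_apply_eq_zero (hM _ (by omega)).1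

theorem isPointwiseFinite_fermionBilinear (m : ℤ) (c : ℤ → A) :
    IsPointwiseFinite fun n => c n • F.fermionBilinear (-n - 1) (m + n) := by
  intro v
  obtain ⟨M, hM⟩ := F.exists_forall_ge_annihilate v
  refine (Set.finite_Icc (-M - 1) (M - m)).subset (Function.support_subset_iff'.2 fun n hn => ?_)
  rw [Set.mem_Icc] at hn
  rw [LinearMap.smul_apply, F.fermionBilinear_apply_eq_zero (hM _ (by omega)).2, smul_zero]

theorem isPointwiseFinite_fermion_mul_boson (m : ℤ) :
    IsPointwiseFinite fun k => F.fermion (m - k) * F.boson k := by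
  intro v
  obtain ⟨M, hM⟩ := F.exists_forall_ge_annihilate v
  refine (Set.finite_Icc (m - M) M).subset (Function.support_subset_iff'.2 fun k hk => ?_)
  rw [Set.mem_Icc] at hk
  rcases le_or_gt M k with hk' | hk'
  · exact F.fermion_boson_apply_eq_zero (.inr (hM k hk').1)
  · exact F.fermion_boson_apply_eq_zero (.inl (hM (m - k) (by omega)).2)

variable {F} in
theorem bosonBilinear_lie {Y : Module.End A V} {a : ℤ} {s : A}
    (hY : ∀ k, ⁅F.boson k, Y⁆ = if k = a then s • 1 else 0) (k l : ℤ) :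
    ⁅F.bosonBilinear k l, Y⁆ =
      (if k = a then s • F.boson l else 0) + if l = a then s • F.boson k else 0 := by
  unfold bosonBilinear
  split_ifs <;> simp_all [mul_lie_eq_mul_lie_add_lie_mul, add_comm]

variable {F} in
theorem fermionBilinear_lie_eq_zero {Y : Module.End A V} (hY : ∀ k, ⁅F.fermion k, Y⁆ = 0)
    (k l : ℤ) : ⁅F.fermionBilinear k l, Y⁆ = 0 := by
  unfold fermionBilinear
  split_ifs <;> simp [mul_lie_eq_mul_lie_add_lie_mul, neg_lie, hY]

theorem fermionBilinear_lie_fermion (k l j : ℤ) :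
    ⁅F.fermionBilinear k l, F.fermion j⁆ =
      (if l + j + 1 = 0 then F.fermion k else 0) - if k + j + 1 = 0 then F.fermion l else 0 := by
  unfold fermionBilinear
  split_ifs <;>
    simp_all [mul_lie_eq_mul_anticommutator_sub, neg_lie, F.anticommutator_fermion_fermion]

end NormalOrdering

section Virasoro

variable [Invertible (2 : A)]

/-- The bosonic Virasoro operator `L_m = ½ ∑ₖ :b_k b_{m-k}:`. -/
def bosonVirasoro (m : ℤ) : Module.End A V :=
  ⅟(2 : A) • pointwiseSum _ (F.isPointwiseFinite_bosonBilinear m)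

/-- The fermionic Virasoro operator `L_m = ½ ∑ᵣ (r + m/2) :ψ_{-r} ψ_{m+r}:`, where
`r = n + 1/2`. -/
def fermionVirasoro (m : ℤ) : Module.End A V :=
  ⅟(2 : A) • pointwiseSum _
    (F.isPointwiseFinite_fermionBilinear m fun n => ((2 * n + m + 1 : ℤ) : A) * ⅟2)

/-- The Virasoro operator `L_m` of the free boson–fermion pair. -/
def virasoro (m : ℤ) : Module.End A V :=
  F.bosonVirasoro m + F.fermionVirasoro m

theorem virasoro_apply (m : ℤ) (v : V) :
    F.virasoro m v =
      ⅟(2 : A) • (∑ᶠ k, F.bosonBilinear k (m - k) v) +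
        ⅟(2 : A) • ∑ᶠ n : ℤ,
          (((2 * n + m + 1 : ℤ) : A) * ⅟2) • F.fermionBilinear (-n - 1) (m + n) v :=
  rfl

end Virasoro

/-- The supercurrent mode `G_{m+1/2} = ∑ₖ ψ_{m+1/2-k} b_k`. -/
def supercurrent (m : ℤ) : Module.End A V :=
  pointwiseSum _ (F.isPointwiseFinite_fermion_mul_boson m)

theorem supercurrent_apply (m : ℤ) (v : V) :
    F.supercurrent m v = ∑ᶠ k, F.fermion (m - k) (F.boson k v) :=
  rfl

/-- `Y` is an even operator whose only nontrivial bracket with a mode is `[b_a, Y] = s`. -/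
structure IsConjugateToBoson (Y : Module.End A V) (a : ℤ) (s : A) : Prop where
  boson_lie : ∀ k, ⁅F.boson k, Y⁆ = if k = a then s • 1 else 0
  fermion_lie : ∀ k, ⁅F.fermion k, Y⁆ = 0

theorem isConjugateToBoson_coord (a : ℕ) : F.IsConjugateToBoson (F.coord a) a F.sqrtHbar :=
  ⟨fun k => F.lie_boson_coord k a, fun k => F.lie_fermion_coord k a⟩

theorem isConjugateToBoson_boson (j : ℤ) : F.IsConjugateToBoson (F.boson j) (-j) (-j : ℤ) where
  boson_lie k := by
    rw [F.lie_boson_boson]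
    simp only [← eq_neg_iff_add_eq_zero]
    split_ifs with h
    · rw [h]
    · rfl
  fermion_lie k := by rw [← lie_skew, F.lie_boson_fermion, neg_zero]

section BracketsWithGenerators

variable {F} {Y : Module.End A V} {a : ℤ} {s : A} (hY : F.IsConjugateToBoson Y a s)
include hY

theorem IsConjugateToBoson.supercurrent_lie (m : ℤ) :
    ⁅F.supercurrent m, Y⁆ = s • F.fermion (m - a) := by
  rw [supercurrent, pointwiseSum_lie _ Y {a} fun k hk => ?_, Finset.sum_singleton]
  · simp [mul_lie_eq_mul_lie_add_lie_mul, hY.boson_lie, hY.fermion_lie]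
  · simp_all [mul_lie_eq_mul_lie_add_lie_mul, hY.boson_lie, hY.fermion_lie]

variable [Invertible (2 : A)]

theorem IsConjugateToBoson.bosonVirasoro_lie (m : ℤ) :
    ⁅F.bosonVirasoro m, Y⁆ = s • F.boson (m - a) := by
  have hsum : ⁅pointwiseSum _ (F.isPointwiseFinite_bosonBilinear m), Y⁆
      = s • F.boson (m - a) + s • F.boson (m - a) := by
    have hterm (k : ℤ) : ⁅F.bosonBilinear k (m - k), Y⁆ =
        (if k = a then s • F.boson (m - k) else 0) + if k = m - a then s • F.boson k else 0 := by
      simp only [bosonBilinear_lie hY.boson_lie, show m - k = a ↔ k = m - a by omega]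
    rw [pointwiseSum_lie _ Y {a, m - a} fun k hk => ?_]
    · simp [hterm, Finset.sum_add_distrib]
    · simp_all
  rw [bosonVirasoro, smul_lie, hsum, smul_add, invOf_two_smul_add_invOf_two_smul]

theorem IsConjugateToBoson.fermionVirasoro_lie (m : ℤ) : ⁅F.fermionVirasoro m, Y⁆ = 0 := by
  rw [fermionVirasoro, smul_lie, pointwiseSum_lie _ Y ∅, Finset.sum_empty, smul_zero]
  intro n _
  rw [smul_lie, fermionBilinear_lie_eq_zero hY.fermion_lie, smul_zero]

theorem IsConjugateToBoson.virasoro_lie (m : ℤ) : ⁅F.virasoro m, Y⁆ = s • F.boson (m - a) := by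
  rw [virasoro, add_lie, hY.bosonVirasoro_lie, hY.fermionVirasoro_lie, add_zero]

end BracketsWithGenerators

section BracketsWithModes

theorem supercurrent_lie_boson (m j : ℤ) :
    ⁅F.supercurrent m, F.boson j⁆ = ((-j : ℤ) : A) • F.fermion (m + j) := by
  rw [(F.isConjugateToBoson_boson j).supercurrent_lie, sub_neg_eq_add]

theorem anticommutator_supercurrent_fermion (m j : ℤ) :
    anticommutator (F.supercurrent m) (F.fermion j) = F.boson (m + j + 1) := by
  have hterm (k : ℤ) : anticommutator (F.fermion (m - k) * F.boson k) (F.fermion j) =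
      if k = m + j + 1 then F.boson k else 0 := by
    have hk : m - k + j + 1 = 0 ↔ k = m + j + 1 := by omega
    simp only [mul_anticommutator, F.lie_boson_fermion, F.anticommutator_fermion_fermion, hk,
      mul_zero, zero_add, ite_mul, one_mul, zero_mul]
  rw [supercurrent, anticommutator_pointwiseSum _ _ {m + j + 1} fun k hk => ?_]
  · simp [hterm]
  · simp_all

variable [Invertible (2 : A)]

theorem virasoro_lie_boson (m j : ℤ) :
    ⁅F.virasoro m, F.boson j⁆ = ((-j : ℤ) : A) • F.boson (m + j) := by
  rw [(F.isConjugateToBoson_boson j).virasoro_lie, sub_neg_eq_add]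

theorem bosonVirasoro_lie_fermion (m j : ℤ) : ⁅F.bosonVirasoro m, F.fermion j⁆ = 0 := by
  rw [bosonVirasoro, smul_lie, pointwiseSum_lie _ _ ∅, Finset.sum_empty, smul_zero]
  intro k _
  unfold bosonBilinear
  split_ifs <;> simp only [mul_lie_eq_mul_lie_add_lie_mul, F.lie_boson_fermion, mul_zero, zero_mul,
    add_zero]

/-- The two summands that see `ψ_{j+1/2}` have opposite signs but also opposite coefficients
`±(2j + m + 1)/2`, so that they contribute equally. -/
theorem fermionVirasoro_summand_lie_fermion (m j n : ℤ) :
    ⁅(((2 * n + m + 1 : ℤ) : A) * ⅟2) • F.fermionBilinear (-n - 1) (m + n), F.fermion j⁆ =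
      (if n = -(m + j + 1) then -(((2 * j + m + 1 : ℤ) : A) * ⅟2) • F.fermion (m + j) else 0) +
        if n = j then -(((2 * j + m + 1 : ℤ) : A) * ⅟2) • F.fermion (m + j) else 0 := by
  have hleft : m + n + j + 1 = 0 ↔ n = -(m + j + 1) := by omega
  have hright : -n - 1 + j + 1 = 0 ↔ n = j := by omega
  simp only [smul_lie, fermionBilinear_lie_fermion, hleft, hright]
  rw [smul_sub, sub_eq_add_neg (_ • _)]
  congr 1
  · split_ifs with h
    · rw [show -n - 1 = m + j by omega, show 2 * n + m + 1 = -(2 * j + m + 1) by omega,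
        Int.cast_neg, neg_mul]
    · exact smul_zero _
  · split_ifs with h
    · rw [h, neg_smul]
    · rw [smul_zero, neg_zero]

theorem fermionVirasoro_lie_fermion (m j : ℤ) :
    ⁅F.fermionVirasoro m, F.fermion j⁆ =
      -(((2 * j + m + 1 : ℤ) : A) * ⅟2) • F.fermion (m + j) := by
  rw [fermionVirasoro, smul_lie, pointwiseSum_lie _ _ {-(m + j + 1), j} fun n hn => ?_]
  · simp only [fermionVirasoro_summand_lie_fermion, Finset.sum_add_distrib, Finset.sum_ite_eq',
      Finset.mem_insert, Finset.mem_singleton, true_or, or_true, if_true, smul_add,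
      invOf_two_smul_add_invOf_two_smul]
  · rw [Finset.mem_insert, Finset.mem_singleton, not_or] at hn
    rw [fermionVirasoro_summand_lie_fermion, if_neg hn.1, if_neg hn.2, add_zero]

theorem virasoro_lie_fermion (m j : ℤ) :
    ⁅F.virasoro m, F.fermion j⁆ = -(((2 * j + m + 1 : ℤ) : A) * ⅟2) • F.fermion (m + j) := by
  rw [virasoro, add_lie, F.bosonVirasoro_lie_fermion, F.fermionVirasoro_lie_fermion, zero_add]

end BracketsWithModes

section Vacuum

theorem supercurrent_vac {m : ℤ} (hm : -1 ≤ m) : F.supercurrent m F.vac = 0 := by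
  refine pointwiseSum_apply_eq_zero _ fun k => F.fermion_boson_apply_eq_zero ?_
  rcases le_or_gt 0 k with hk | hk
  · exact .inr (F.boson_vac k hk)
  · exact .inl (F.fermion_vac (m - k) (by omega))

variable [Invertible (2 : A)]

theorem virasoro_vac {m : ℤ} (hm : -1 ≤ m) : F.virasoro m F.vac = 0 := by
  have hboson (k : ℤ) : F.bosonBilinear k (m - k) F.vac = 0 :=
    F.bosonBilinear_apply_eq_zero (F.boson_vac _ (by omega))
  have hfermion (n : ℤ) :
      ((((2 * n + m + 1 : ℤ) : A) * ⅟2) • F.fermionBilinear (-n - 1) (m + n)) F.vac = 0 := by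
    rw [LinearMap.smul_apply]
    rcases eq_or_ne (2 * n + m + 1) 0 with hn | hn
    · rw [hn, Int.cast_zero, zero_mul, zero_smul]
    · rw [F.fermionBilinear_apply_eq_zero (F.fermion_vac _ (by omega)), smul_zero]
  simp only [virasoro, bosonVirasoro, fermionVirasoro, LinearMap.add_apply, LinearMap.smul_apply,
    pointwiseSum_apply_eq_zero _ hboson, pointwiseSum_apply_eq_zero _ hfermion, smul_zero,
    add_zero]

end Vacuum

section SuperVirasoroRelations

variable [Invertible (2 : A)]

theorem anticommutator_supercurrent_supercurrent {m n : ℤ} (hm : -1 ≤ m) (hn : -1 ≤ n)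
    (hmn : -1 ≤ m + n + 1) :
    anticommutator (F.supercurrent m) (F.supercurrent n) = (2 : A) • F.virasoro (m + n + 1) := by
  refine F.ext_of_lie ?_ (fun a => ?_) (fun j => ?_)
  · simp only [anticommutator, LinearMap.add_apply, LinearMap.smul_apply, Module.End.mul_apply,
      F.supercurrent_vac hm, F.supercurrent_vac hn, F.virasoro_vac hmn, map_zero, smul_zero,
      add_zero]
  · have ha := F.isConjugateToBoson_coord a
    rw [anticommutator_lie_eq_add_anticommutator, ha.supercurrent_lie, ha.supercurrent_lie,
      anticommutator_smul, anticommutator_smul, anticommutator_supercurrent_fermion,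
      anticommutator_supercurrent_fermion, smul_lie, ha.virasoro_lie,
      show m + (n - a) + 1 = m + n + 1 - a by ring, show n + (m - a) + 1 = m + n + 1 - a by ring]
    module
  · rw [anticommutator_lie_eq_add_lie, anticommutator_supercurrent_fermion,
      anticommutator_supercurrent_fermion, supercurrent_lie_boson, supercurrent_lie_boson,
      smul_lie, virasoro_lie_fermion, show m + (n + j + 1) = m + n + 1 + j by ring,
      show n + (m + j + 1) = m + n + 1 + j by ring]
    linear_combination (norm := (push_cast; module))
      (mul_invOf_self (2 : A) * ((m + n + 2 * j + 2 : ℤ) : A)) • F.fermion (m + n + 1 + j)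

theorem virasoro_lie_supercurrent {m n : ℤ} (hm : -1 ≤ m) (hn : -1 ≤ n) :
    ⁅F.virasoro m, F.supercurrent n⁆ =
      (((m - 2 * n - 1 : ℤ) : A) * ⅟2) • F.supercurrent (m + n) := by
  refine F.ext_of_anticommutator ?_ (fun a => ?_) (fun j => ?_)
  · have hrhs : (((m - 2 * n - 1 : ℤ) : A) * ⅟2) • F.supercurrent (m + n) F.vac = 0 := by
      rcases eq_or_ne (m - 2 * n - 1) 0 with h | h
      · rw [h, Int.cast_zero, zero_mul, zero_smul]
      · rw [F.supercurrent_vac (by omega), smul_zero]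
    rw [LinearMap.smul_apply, hrhs]
    simp only [Ring.lie_def, LinearMap.sub_apply, Module.End.mul_apply, F.virasoro_vac hm,
      F.supercurrent_vac hn, map_zero, sub_zero]
  · have ha := F.isConjugateToBoson_coord a
    rw [lie_lie, ha.supercurrent_lie, ha.virasoro_lie, lie_smul, lie_smul, smul_lie,
      virasoro_lie_fermion, supercurrent_lie_boson, ha.supercurrent_lie,
      show m + (n - a) = m + n - a by ring, show n + (m - a) = m + n - a by ring]
    linear_combination (norm := (push_cast; module))
      (mul_invOf_self (2 : A) * (F.sqrtHbar * ((a - m : ℤ) : A))) • F.fermion (m + n - a)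
  · rw [lie_anticommutator, anticommutator_supercurrent_fermion, virasoro_lie_fermion,
      virasoro_lie_boson, anticommutator_smul, anticommutator_supercurrent_fermion,
      smul_anticommutator, anticommutator_supercurrent_fermion,
      show m + (n + j + 1) = m + n + j + 1 by ring, show n + (m + j) + 1 = m + n + j + 1 by ring]
    linear_combination (norm := (push_cast; module))
      (mul_invOf_self (2 : A) * ((n + j + 1 : ℤ) : A)) • F.boson (m + n + j + 1)

theorem virasoro_lie_virasoro {m n : ℤ} (hm : -1 ≤ m) (hn : -1 ≤ n) :
    ⁅F.virasoro m, F.virasoro n⁆ = ((m - n : ℤ) : A) • F.virasoro (m + n) := by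
  refine F.ext_of_lie ?_ (fun a => ?_) (fun j => ?_)
  · have hrhs : ((m - n : ℤ) : A) • F.virasoro (m + n) F.vac = 0 := by
      rcases eq_or_ne m n with rfl | h
      · rw [sub_self, Int.cast_zero, zero_smul]
      · rw [F.virasoro_vac (by omega), smul_zero]
    rw [LinearMap.smul_apply, hrhs]
    simp only [Ring.lie_def, LinearMap.sub_apply, Module.End.mul_apply, F.virasoro_vac hm,
      F.virasoro_vac hn, map_zero, sub_zero]
  · have ha := F.isConjugateToBoson_coord a
    rw [lie_lie, ha.virasoro_lie, ha.virasoro_lie, lie_smul, lie_smul, smul_lie,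
      virasoro_lie_boson, virasoro_lie_boson, ha.virasoro_lie,
      show m + (n - a) = m + n - a by ring, show n + (m - a) = m + n - a by ring]
    push_cast
    module
  · rw [lie_lie, virasoro_lie_fermion, virasoro_lie_fermion, lie_smul, lie_smul, smul_lie,
      virasoro_lie_fermion, virasoro_lie_fermion, virasoro_lie_fermion,
      show m + (n + j) = m + n + j by ring, show n + (m + j) = m + n + j by ring]
    linear_combination (norm := (push_cast; module))
      (mul_invOf_self (2 : A) * (⅟(2 : A) * (((n - m) * (m + n + 2 * j + 1) : ℤ) : A))) •
        F.fermion (m + n + j)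

end SuperVirasoroRelations

section DilatonShift

variable (s : A) (d : ℤ → A) (N : ℤ)

/-- The supercurrent mode `G_{n+1/2+N-1}` with the linear term `s ψ_{n+1/2}` which it
acquires when the mode `b_{N-1}` is shifted by `s`. -/
def dilatonSupercurrent (n : ℤ) : Module.End A V :=
  F.supercurrent (n + N - 1) + s • F.fermion n

theorem dilatonSupercurrent_apply (n : ℤ) (v : V) :
    F.dilatonSupercurrent s N n v = F.supercurrent (n + N - 1) v + s • F.fermion n v :=
  rfl

variable [Invertible (2 : A)]

/-- The Virasoro operator `L_{i+N-1}` with the linear term `s b_i` which it acquires under the same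
shift `b_{N-1} ↦ b_{N-1} + s`, and with an arbitrary additive constant `d_i`. -/
def dilatonVirasoro (i : ℤ) : Module.End A V :=
  F.virasoro (i + N - 1) + s • F.boson i + d i • 1

theorem dilatonVirasoro_apply (i : ℤ) (v : V) :
    F.dilatonVirasoro s d N i v = F.virasoro (i + N - 1) v + s • F.boson i v + d i • v :=
  rfl

variable {d N} (hN : 0 ≤ N)
include hN

theorem dilatonVirasoro_lie_dilatonVirasoro (hd : ∀ i, N ≤ i → d i = 0) {i j : ℤ} (hi : 0 ≤ i)
    (hj : 0 ≤ j) :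
    ⁅F.dilatonVirasoro s d N i, F.dilatonVirasoro s d N j⁆ =
      ((i - j : ℤ) : A) • F.dilatonVirasoro s d N (i + j + N - 1) := by
  have hboson : ⁅F.boson i, F.boson j⁆ = 0 := by
    rw [F.lie_boson_boson]
    split_ifs with h
    · rw [show i = 0 by omega, Int.cast_zero, zero_smul]
    · rfl
  have hboson_virasoro (m : ℤ) :
      ⁅F.boson i, F.virasoro m⁆ = -(((-i : ℤ) : A) • F.boson (m + i)) := by
    rw [← lie_skew, virasoro_lie_boson]
  have hconst : ((i - j : ℤ) : A) * d (i + j + N - 1) = 0 := by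
    rcases eq_or_ne i j with rfl | hij
    · rw [sub_self, Int.cast_zero, zero_mul]
    · rw [hd _ (by omega), mul_zero]
  simp only [dilatonVirasoro, add_lie, lie_add, lie_smul, smul_lie, one_lie_eq_zero,
    lie_one_eq_zero, hboson, hboson_virasoro, virasoro_lie_boson, smul_add, smul_smul, hconst]
  rw [F.virasoro_lie_virasoro (by omega) (by omega),
    show i + N - 1 + j = i + j + N - 1 by ring, show j + N - 1 + i = i + j + N - 1 by ring,
    show i + N - 1 + (j + N - 1) = i + j + N - 1 + N - 1 by ring]
  push_cast
  module

theorem dilatonVirasoro_lie_dilatonSupercurrent {i n : ℤ} (hi : 0 ≤ i) (hn : 0 ≤ n) :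
    ⁅F.dilatonVirasoro s d N i, F.dilatonSupercurrent s N n⁆ =
      (((i - N - 2 * n : ℤ) : A) * ⅟2) • F.dilatonSupercurrent s N (i + n + N - 1) := by
  have hboson_supercurrent (m : ℤ) :
      ⁅F.boson i, F.supercurrent m⁆ = -(((-i : ℤ) : A) • F.fermion (m + i)) := by
    rw [← lie_skew, supercurrent_lie_boson]
  simp only [dilatonVirasoro, dilatonSupercurrent, add_lie, lie_add, lie_smul, smul_lie,
    one_lie_eq_zero, F.lie_boson_fermion, hboson_supercurrent, virasoro_lie_fermion]
  rw [F.virasoro_lie_supercurrent (by omega) (by omega),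
    show i + N - 1 + n = i + n + N - 1 by ring, show n + N - 1 + i = i + n + N - 1 by ring,
    show i + N - 1 + (n + N - 1) = i + n + N - 1 + N - 1 by ring]
  linear_combination (norm := (push_cast; module))
    (mul_invOf_self (2 : A) * (-s * i)) • F.fermion (i + n + N - 1)

theorem anticommutator_dilatonSupercurrent (hd : ∀ i, N ≤ i → d i = 0) {n m : ℤ} (hn : 0 ≤ n)
    (hm : 0 ≤ m) :
    anticommutator (F.dilatonSupercurrent s N n) (F.dilatonSupercurrent s N m) =
      (2 : A) • F.dilatonVirasoro s d N (n + m + N) := by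
  have hfermion : anticommutator (F.fermion n) (F.fermion m) = 0 := by
    rw [F.anticommutator_fermion_fermion, if_neg (by omega)]
  have hfermion_supercurrent (k : ℤ) :
      anticommutator (F.fermion n) (F.supercurrent k) = F.boson (k + n + 1) := by
    rw [anticommutator_comm, anticommutator_supercurrent_fermion]
  simp only [dilatonVirasoro, dilatonSupercurrent, anticommutator_add, add_anticommutator,
    anticommutator_smul, smul_anticommutator, hfermion, hfermion_supercurrent,
    anticommutator_supercurrent_fermion, hd (n + m + N) (by omega)]
  rw [F.anticommutator_supercurrent_supercurrent (by omega) (by omega) (by omega),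
    show n + N - 1 + (m + N - 1) + 1 = n + m + N + N - 1 by ring,
    show n + N - 1 + m + 1 = n + m + N by ring, show m + N - 1 + n + 1 = n + m + N by ring]
  module

end DilatonShift

end FockModule

section PolynomialModes

open MvPolynomial (X pderiv)

variable {A : Type*} [CommRing A]

theorem mulLeft_lie_mulLeft {B : Type*} [CommRing B] [Algebra A B] (b c : B) :
    ⁅LinearMap.mulLeft A b, LinearMap.mulLeft A c⁆ = 0 := by
  ext d
  simp [Ring.lie_def, mul_left_comm]

theorem mulLeft_smul {B : Type*} [Ring B] [Algebra A B] (c : A) (b : B) :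
    LinearMap.mulLeft A (c • b) = c • LinearMap.mulLeft A b :=
  map_smul (LinearMap.mul A B) c b

theorem derivation_lie_mulLeft {B : Type*} [CommRing B] [Algebra A B] (D : Derivation A B B)
    (b : B) : ⁅D.toLinearMap, LinearMap.mulLeft A b⁆ = LinearMap.mulLeft A (D b) := by
  ext c
  simp [Ring.lie_def, mul_comm]

theorem smul_pderiv_lie_smul_pderiv {σ : Type*} (c : A) (a b : σ) :
    ⁅(c • pderiv a : Derivation A (MvPolynomial σ A) _).toLinearMap,
      (c • pderiv b : Derivation A (MvPolynomial σ A) _).toLinearMap⁆ = 0 := by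
  have hD : ⁅(c • pderiv a : Derivation A (MvPolynomial σ A) (MvPolynomial σ A)),
      c • pderiv b⁆ = 0 :=
    MvPolynomial.derivation_ext fun d => by
      classical
      rw [Derivation.commutator_apply]
      simp [MvPolynomial.pderiv_X, Pi.single_apply, apply_ite]
  exact congrArg Derivation.toLinearMap hD

theorem submodule_eq_top_of_X_mul_mem {σ : Type*} {W : Submodule A (MvPolynomial σ A)}
    (hone : 1 ∈ W) (hX : ∀ a, ∀ p ∈ W, X a * p ∈ W) : W = ⊤ := by
  refine Submodule.eq_top_iff'.2 fun p => ?_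
  induction p using MvPolynomial.induction_on with
  | C c => simpa [MvPolynomial.smul_eq_C_mul] using W.smul_mem c hone
  | add p q hp hq => exact W.add_mem hp hq
  | mul_X p a hp => exact mul_comm p (X a) ▸ hX a p hp

end PolynomialModes

section ExteriorModes

variable {A M : Type*} [CommRing A] [AddCommGroup M] [Module A M]

theorem anticommutator_contractLeft_contractLeft {Q : QuadraticForm A M} (d e : Module.Dual A M) :
    anticommutator (CliffordAlgebra.contractLeft (Q := Q) d) (CliffordAlgebra.contractLeft e) =
      0 := by
  ext x
  simp [anticommutator, CliffordAlgebra.contractLeft_comm d e x]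

theorem anticommutator_contractLeft_mulLeft_ι {Q : QuadraticForm A M} (d : Module.Dual A M)
    (v : M) :
    anticommutator (CliffordAlgebra.contractLeft d) (LinearMap.mulLeft A (CliffordAlgebra.ι Q v)) =
      d v • 1 := by
  ext x
  simp [anticommutator, CliffordAlgebra.contractLeft_ι_mul]

theorem anticommutator_mulLeft_ι_mulLeft_ι (v w : M) :
    anticommutator (LinearMap.mulLeft A (ExteriorAlgebra.ι A v))
      (LinearMap.mulLeft A (ExteriorAlgebra.ι A w)) = 0 := by
  ext x
  simp [anticommutator, ← mul_assoc, ← add_mul, ExteriorAlgebra.ι_add_mul_swap]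

theorem submodule_eq_top_of_ι_single_mul_mem {κ : Type*}
    {W : Submodule A (ExteriorAlgebra A (κ →₀ A))} (hone : 1 ∈ W)
    (hι : ∀ a, ∀ w ∈ W, ExteriorAlgebra.ι A (Finsupp.single a 1) * w ∈ W) : W = ⊤ := by
  refine Submodule.eq_top_iff'.2 fun w => ?_
  induction w using CliffordAlgebra.left_induction with
  | algebraMap c =>
    rw [Algebra.algebraMap_eq_smul_one]
    exact W.smul_mem c hone
  | add v w hv hw => exact W.add_mem hv hw
  | ι_mul w v hw =>
    induction v using Finsupp.induction_linear with
    | zero => simp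
    | add v v' hv hv' => simpa [add_mul] using W.add_mem hv hv'
    | single a c =>
      simpa [← map_smul, ← smul_mul_assoc] using W.smul_mem c (hι a w hw)

end ExteriorModes

section TensorFactors

variable {A M N : Type*} [CommRing A] [AddCommGroup M] [Module A M] [AddCommGroup N] [Module A N]

theorem rTensor_lie_rTensor (f g : Module.End A M) :
    ⁅(f.rTensor N : Module.End A _), (g.rTensor N : Module.End A _)⁆ = ⁅f, g⁆.rTensor N := by
  simp [Ring.lie_def, LinearMap.rTensor_mul, LinearMap.rTensor_sub]

theorem anticommutator_lTensor_lTensor (f g : Module.End A N) :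
    anticommutator (f.lTensor M : Module.End A _) (g.lTensor M) =
      (anticommutator f g).lTensor M := by
  simp [anticommutator, LinearMap.lTensor_mul, LinearMap.lTensor_add]

theorem commute_rTensor_lTensor (f : Module.End A M) (g : Module.End A N) :
    Commute (f.rTensor N : Module.End A _) (g.lTensor M : Module.End A _) := by
  rw [commute_iff_eq, Module.End.mul_eq_comp, Module.End.mul_eq_comp,
    LinearMap.rTensor_comp_lTensor, LinearMap.lTensor_comp_rTensor]

theorem rTensor_lie_lTensor (f : Module.End A M) (g : Module.End A N) :
    ⁅(f.rTensor N : Module.End A _), (g.lTensor M : Module.End A _)⁆ = 0 :=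
  (commute_rTensor_lTensor f g).lie_eq

theorem lTensor_lie_rTensor (f : Module.End A M) (g : Module.End A N) :
    ⁅(g.lTensor M : Module.End A _), (f.rTensor N : Module.End A _)⁆ = 0 :=
  (commute_rTensor_lTensor f g).symm.lie_eq

theorem submodule_eq_top_of_tmul_mem {W : Submodule A (M ⊗[A] N)} (hW : ∀ x y, x ⊗ₜ[A] y ∈ W) :
    W = ⊤ := by
  refine Submodule.eq_top_iff'.2 fun v => ?_
  induction v with
  | zero => exact W.zero_mem
  | add v w hv hw => exact W.add_mem hv hw
  | tmul x y => exact hW x y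

end TensorFactors

section FockSpace

open MvPolynomial (X pderiv)

variable {A : Type*} [CommRing A] (u : Aˣ)

/-- The boson mode `b_k` on polynomials, with `√ℏ = u`. -/
def bosonMode : ℤ → Module.End A (MvPolynomial ℕ A)
  | .ofNat a => ((u : A) • pderiv a : Derivation A (MvPolynomial ℕ A) _).toLinearMap
  | .negSucc a => LinearMap.mulLeft A ((((a + 1 : ℕ) : A) * ↑u⁻¹) • X (a + 1))

/-- The fermion mode `ψ_{n+1/2}` on the exterior algebra, with `√ℏ = u`. -/
def fermionMode : ℤ → Module.End A (ExteriorAlgebra A (ℕ+ →₀ A))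
  | .ofNat a => CliffordAlgebra.contractLeft ((u : A) • Finsupp.lapply a.succPNat)
  | .negSucc a =>
    LinearMap.mulLeft A (ExteriorAlgebra.ι A (Finsupp.single a.succPNat (↑u⁻¹ : A)))

theorem bosonMode_lie_X (m : ℤ) (a : ℕ) :
    ⁅bosonMode u m, LinearMap.mulLeft A (X a : MvPolynomial ℕ A)⁆ =
      if m = a then (u : A) • 1 else 0 := by
  match m with
  | .ofNat b =>
    rw [bosonMode, derivation_lie_mulLeft]
    ext p
    simp only [Derivation.smul_apply, MvPolynomial.pderiv_X, Pi.single_apply, eq_comm,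
      Int.ofNat_eq_natCast, Nat.cast_inj]
    split_ifs <;> simp
  | .negSucc b =>
    rw [bosonMode, mulLeft_lie_mulLeft, if_neg (by omega)]

theorem bosonMode_ofNat_lie_bosonMode_negSucc (a b : ℕ) :
    ⁅bosonMode u (.ofNat a), bosonMode u (.negSucc b)⁆ =
      if a = b + 1 then (a : A) • 1 else 0 := by
  rw [bosonMode, bosonMode, derivation_lie_mulLeft, Derivation.map_smul, Derivation.smul_apply,
    MvPolynomial.pderiv_X, smul_smul, mul_assoc, Units.inv_mul, mul_one, Pi.single_apply]
  ext p
  split_ifs with h h' h'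
  · simp [h']
  · exact absurd h.symm h'
  · exact absurd h'.symm h
  · simp

theorem bosonMode_lie_bosonMode (m n : ℤ) :
    ⁅bosonMode u m, bosonMode u n⁆ = if m + n = 0 then (m : A) • 1 else 0 := by
  match m, n with
  | .ofNat a, .ofNat b =>
    rw [bosonMode, bosonMode, smul_pderiv_lie_smul_pderiv]
    split_ifs with h
    · rw [show Int.ofNat a = 0 by simp only [Int.ofNat_eq_natCast] at h ⊢; omega, Int.cast_zero,
        zero_smul]
    · rfl
  | .ofNat a, .negSucc b =>
    rw [bosonMode_ofNat_lie_bosonMode_negSucc]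
    exact if_congr (by simp only [Int.ofNat_eq_natCast]; omega) (by simp) rfl
  | .negSucc a, .ofNat b =>
    rw [← lie_skew, bosonMode_ofNat_lie_bosonMode_negSucc]
    split_ifs with h h' h'
    · rw [h, Int.cast_negSucc]
      exact (neg_smul _ _).symm
    · simp only [Int.ofNat_eq_natCast] at h'
      omega
    · simp only [Int.ofNat_eq_natCast] at h'
      omega
    · exact neg_zero
  | .negSucc a, .negSucc b =>
    rw [bosonMode, bosonMode, mulLeft_lie_mulLeft, if_neg (by omega)]

theorem anticommutator_fermionMode_ofNat_negSucc (a b : ℕ) :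
    anticommutator (fermionMode u (.ofNat a)) (fermionMode u (.negSucc b)) =
      if a = b then 1 else 0 := by
  rw [fermionMode, fermionMode, ExteriorAlgebra.ι, anticommutator_contractLeft_mulLeft_ι,
    LinearMap.smul_apply, Finsupp.lapply_apply, Finsupp.single_apply]
  simp only [Nat.succPNat_inj, eq_comm (a := b)]
  split_ifs
  · rw [smul_eq_mul, Units.mul_inv, one_smul]
  · rw [smul_zero, zero_smul]

theorem anticommutator_fermionMode (m n : ℤ) :
    anticommutator (fermionMode u m) (fermionMode u n) = if m + n + 1 = 0 then 1 else 0 := by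
  match m, n with
  | .ofNat a, .ofNat b =>
    rw [fermionMode, fermionMode, anticommutator_contractLeft_contractLeft,
      if_neg (by simp only [Int.ofNat_eq_natCast]; omega)]
  | .ofNat a, .negSucc b =>
    rw [anticommutator_fermionMode_ofNat_negSucc]
    exact if_congr (by simp only [Int.ofNat_eq_natCast]; omega) rfl rfl
  | .negSucc a, .ofNat b =>
    rw [anticommutator_comm, anticommutator_fermionMode_ofNat_negSucc]
    exact if_congr (by simp only [Int.ofNat_eq_natCast]; omega) rfl rfl
  | .negSucc a, .negSucc b =>
    rw [fermionMode, fermionMode, anticommutator_mulLeft_ι_mulLeft_ι, if_neg (by omega)]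

theorem bosonMode_one {m : ℤ} (hm : 0 ≤ m) : bosonMode u m 1 = 0 := by
  lift m to ℕ using hm
  exact Derivation.map_one_eq_zero _

theorem fermionMode_one {m : ℤ} (hm : 0 ≤ m) : fermionMode u m 1 = 0 := by
  lift m to ℕ using hm
  exact CliffordAlgebra.contractLeft_one (Q := 0) ((u : A) • Finsupp.lapply m.succPNat)

/-- The Fock space of polynomials in the `x^a` with coefficients in the exterior algebra on the
`θ^a`, with `√ℏ = u`. -/
def fockModule : FockModule A (MvPolynomial ℕ A ⊗[A] ExteriorAlgebra A (ℕ+ →₀ A)) where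
  boson k := (bosonMode u k).rTensor _
  fermion k := (fermionMode u k).lTensor _
  coord a := (LinearMap.mulLeft A (X a)).rTensor _
  sqrtHbar := u
  vac := 1 ⊗ₜ 1
  lie_boson_boson m n := by
    rw [rTensor_lie_rTensor, bosonMode_lie_bosonMode]
    split_ifs
    · rw [LinearMap.rTensor_smul, Module.End.one_eq_id, LinearMap.rTensor_id, Module.End.one_eq_id]
    · exact LinearMap.rTensor_zero (ExteriorAlgebra A (ℕ+ →₀ A))
  anticommutator_fermion_fermion m n := by
    rw [anticommutator_lTensor_lTensor, anticommutator_fermionMode]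
    split_ifs
    · exact LinearMap.lTensor_id _ _
    · exact LinearMap.lTensor_zero _
  lie_boson_fermion m n := rTensor_lie_lTensor _ _
  lie_boson_coord m a := by
    rw [rTensor_lie_rTensor, bosonMode_lie_X]
    split_ifs
    · rw [LinearMap.rTensor_smul, Module.End.one_eq_id, LinearMap.rTensor_id, Module.End.one_eq_id]
    · exact LinearMap.rTensor_zero _
  lie_fermion_coord m a := lTensor_lie_rTensor _ _
  boson_vac m hm := by
    rw [LinearMap.rTensor_tmul, bosonMode_one u hm, TensorProduct.zero_tmul]
  fermion_vac m hm := by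
    rw [LinearMap.lTensor_tmul, fermionMode_one u hm, TensorProduct.tmul_zero]
  eq_top_of_vac_mem W hvac hcoord hfermion := by
    have hodd (w : ExteriorAlgebra A (ℕ+ →₀ A)) : 1 ⊗ₜ w ∈ W := by
      suffices h : W.comap (TensorProduct.mk A _ _ 1) = ⊤ from h.ge Submodule.mem_top
      refine submodule_eq_top_of_ι_single_mul_mem hvac fun a w hw => ?_
      have h := W.smul_mem (u : A) (hfermion (.negSucc a.natPred) (Int.negSucc_lt_zero _) _ hw)
      rwa [TensorProduct.mk_apply, LinearMap.lTensor_tmul, fermionMode, PNat.succPNat_natPred,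
        ← TensorProduct.tmul_smul, LinearMap.mulLeft_apply, ← smul_mul_assoc, ← map_smul,
        Finsupp.smul_single, smul_eq_mul, Units.mul_inv] at h
    have heven (w : ExteriorAlgebra A (ℕ+ →₀ A)) (p) : p ⊗ₜ w ∈ W := by
      suffices h : W.comap ((TensorProduct.mk A _ _).flip w) = ⊤ from h.ge Submodule.mem_top
      exact submodule_eq_top_of_X_mul_mem (hodd w) fun a p hp => hcoord a _ hp
    exact submodule_eq_top_of_tmul_mem fun p w => heven w p

theorem fockModule_boson_of_nonneg {m : ℤ} (hm : 0 ≤ m) :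
    (fockModule u).boson m = (u : A) • (pderiv m.toNat).toLinearMap.rTensor _ := by
  lift m to ℕ using hm
  exact LinearMap.rTensor_smul _ _ _

theorem fockModule_boson_of_neg {m : ℤ} (hm : m < 0) :
    (fockModule u).boson m =
      (((-m : ℤ) : A) * ↑u⁻¹) • (LinearMap.mulLeft A (X (-m).toNat)).rTensor _ := by
  obtain ⟨a, rfl⟩ := Int.eq_negSucc_of_lt_zero hm
  rw [← LinearMap.rTensor_smul, Int.neg_negSucc, Int.toNat_natCast, Int.cast_natCast,
    ← mulLeft_smul]
  rfl

theorem fockModule_fermion_of_nonneg {m : ℤ} (hm : 0 ≤ m) :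
    (fockModule u).fermion m =
      (u : A) •
        (CliffordAlgebra.contractLeft (Finsupp.lapply ⟨(m + 1).toNat, by omega⟩)).lTensor _ := by
  lift m to ℕ using hm
  rw [← LinearMap.lTensor_smul, ← map_smul]
  rfl

theorem fockModule_fermion_of_neg {m : ℤ} (hm : m < 0) :
    (fockModule u).fermion m =
      (↑u⁻¹ : A) • (LinearMap.mulLeft A
        (ExteriorAlgebra.ι A (Finsupp.single ⟨(-m).toNat, by omega⟩ 1))).lTensor _ := by
  obtain ⟨a, rfl⟩ := Int.eq_negSucc_of_lt_zero hm
  have hsingle : (Finsupp.single a.succPNat ↑u⁻¹ : ℕ+ →₀ A) =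
      (↑u⁻¹ : A) • Finsupp.single a.succPNat 1 := by
    rw [Finsupp.smul_single, smul_eq_mul, mul_one]
  change (fermionMode u (.negSucc a)).lTensor _ = _
  rw [fermionMode, hsingle, map_smul, mulLeft_smul, LinearMap.lTensor_smul]
  rfl

end FockSpace

section Identification

variable (k : Type) [Field k]

/-- `√ℏ = t` as a unit of `R`. -/
def sqrtHbarUnit : (R k)ˣ where
  val := LaurentPolynomial.T 1
  inv := LaurentPolynomial.T (-1)
  val_inv := by rw [← LaurentPolynomial.T_add, add_neg_cancel, LaurentPolynomial.T_zero]
  inv_val := by rw [← LaurentPolynomial.T_add, neg_add_cancel, LaurentPolynomial.T_zero]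

/-- The Fock module structure on the carrier `S`. -/
abbrev superFock : FockModule (R k) (SuperSpace k) := fockModule (sqrtHbarUnit k)

theorem superFock_boson_apply (m : ℤ) (v : SuperSpace k) :
    (superFock k).boson m v = bos k m v := by
  rw [bos]
  split_ifs with hm
  · rw [fockModule_boson_of_nonneg _ hm]
    rfl
  · rw [fockModule_boson_of_neg _ (not_le.1 hm)]
    rfl

theorem superFock_fermion_apply (m : ℤ) (v : SuperSpace k) :
    (superFock k).fermion m v = fer k m v := by
  rw [fer]
  split_ifs with hm
  · rw [fockModule_fermion_of_nonneg _ hm]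
    rfl
  · rw [fockModule_fermion_of_neg _ (not_le.1 hm)]
    rfl

theorem superFock_bosonBilinear_apply (m n : ℤ) (v : SuperSpace k) :
    (superFock k).bosonBilinear m n v = nb k m n v := by
  rw [FockModule.bosonBilinear_apply, nb]
  split_ifs <;> simp only [superFock_boson_apply]

theorem superFock_fermionBilinear_apply (m n : ℤ) (v : SuperSpace k) :
    (superFock k).fermionBilinear m n v = nf k m n v := by
  rw [FockModule.fermionBilinear_apply, nf]
  split_ifs <;> simp only [superFock_fermion_apply]

theorem dXi_eq_smul_boson {i : ℤ} (hi : 0 ≤ i) (v : SuperSpace k) :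
    dXi k i v = (LaurentPolynomial.T (-1) : R k) • (superFock k).boson i v := by
  rw [superFock_boson_apply, bos, dXi, if_pos hi, if_pos hi, smul_smul,
    ← LaurentPolynomial.T_add, neg_add_cancel, LaurentPolynomial.T_zero, one_smul]

theorem dTi_eq_smul_fermion {n : ℤ} (hn : 0 ≤ n) (v : SuperSpace k) :
    dTi k (n + 1) v = (LaurentPolynomial.T (-1) : R k) • (superFock k).fermion n v := by
  rw [superFock_fermion_apply, fer, dTi, dif_pos hn, dif_pos (by omega), smul_smul,
    ← LaurentPolynomial.T_add, neg_add_cancel, LaurentPolynomial.T_zero, one_smul]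

theorem Fop_eq (N : ℤ) {n : ℤ} (hn : 0 ≤ n) (v : SuperSpace k) :
    Fop k N n v = hb k • (superFock k).dilatonSupercurrent (LaurentPolynomial.T (-1)) N n v := by
  rw [Fop, dTi_eq_smul_fermion k hn, ← smul_add, add_comm, FockModule.dilatonSupercurrent_apply,
    FockModule.supercurrent_apply]
  simp only [superFock_fermion_apply, superFock_boson_apply]

/-- The additive constants of the `H_i`, as a sequence in `R`. -/
def centralTerm (N : ℤ) (D : ℤ → k) (i : ℤ) : R k :=
  if i ≤ N - 1 then cs k (D i) else 0

theorem centralTerm_eq_zero {N i : ℤ} (D : ℤ → k) (hi : N ≤ i) : centralTerm k N D i = 0 :=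
  if_neg (by omega)

variable [NeZero (2 : k)]

instance laurentInvertibleTwo : Invertible (2 : R k) where
  invOf := cs k (2 : k)⁻¹
  invOf_mul_self := by
    rw [cs, ← map_ofNat LaurentPolynomial.C 2, ← map_mul, inv_mul_cancel₀ two_ne_zero, map_one]
  mul_invOf_self := by
    rw [cs, ← map_ofNat LaurentPolynomial.C 2, ← map_mul, mul_inv_cancel₀ two_ne_zero, map_one]

theorem Hop_eq (N : ℤ) (D : ℤ → k) {i : ℤ} (hi : 0 ≤ i) (v : SuperSpace k) :
    Hop k N D i v = hb k •
      (superFock k).dilatonVirasoro (LaurentPolynomial.T (-1)) (centralTerm k N D) N i v := by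
  have hcoeff (n : ℤ) : 2 * n + (i + N - 1) + 1 = 2 * n + i + N := by ring
  have hhalf : ⅟(2 : R k) = cs k 2⁻¹ := rfl
  rw [Hop, dXi_eq_smul_boson k hi, FockModule.dilatonVirasoro_apply, FockModule.virasoro_apply,
    centralTerm]
  simp only [superFock_bosonBilinear_apply, superFock_fermionBilinear_apply, hcoeff, hhalf]
  split_ifs <;> module

end Identification

section SuperVirasoro

theorem smul_commutator_apply {A V : Type*} [CommRing A] [AddCommGroup V] [Module A V]
    {X Y Z : Module.End A V} {c : A} (h : ⁅X, Y⁆ = c • Z) (s : A) (v : V) :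
    s • X (s • Y v) - s • Y (s • X v) = (s * c) • (s • Z v) := by
  have hv : X (Y v) - Y (X v) = c • Z v := LinearMap.congr_fun h v
  rw [map_smul, map_smul, ← smul_sub, ← smul_sub, hv]
  module

theorem smul_anticommutator_apply {A V : Type*} [CommRing A] [AddCommGroup V] [Module A V]
    {X Y Z : Module.End A V} {c : A} (h : anticommutator X Y = c • Z) (s : A) (v : V) :
    s • X (s • Y v) + s • Y (s • X v) = (s * c) • (s • Z v) := by
  have hv : X (Y v) + Y (X v) = c • Z v := LinearMap.congr_fun h v
  rw [map_smul, map_smul, ← smul_add, ← smul_add, hv]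
  module

variable {k : Type} [Field k] [NeZero (2 : k)] {N : ℤ} (hN : 0 ≤ N) (D : ℤ → k)

include hN

theorem Hop_commutator_Hop {i j : ℤ} (hi : 0 ≤ i) (hj : 0 ≤ j) (v : SuperSpace k) :
    Hop k N D i (Hop k N D j v) - Hop k N D j (Hop k N D i v)
      = (hb k * ((i - j : ℤ) : R k)) • Hop k N D (i + j + N - 1) v := by
  simp only [Hop_eq k N D hi, Hop_eq k N D hj]
  refine (smul_commutator_apply ((superFock k).dilatonVirasoro_lie_dilatonVirasoro _ hN
    (fun _ => centralTerm_eq_zero k D) hi hj) (hb k) v).trans ?_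
  rcases eq_or_ne i j with rfl | hij
  · simp only [sub_self, Int.cast_zero, mul_zero, zero_smul]
  · rw [Hop_eq k N D (by omega)]

theorem Hop_commutator_Fop {i n : ℤ} (hi : 0 ≤ i) (hn : 0 ≤ n) (v : SuperSpace k) :
    Hop k N D i (Fop k N n v) - Fop k N n (Hop k N D i v)
      = (hb k * ((i - N - 2 * n : ℤ) : R k) * cs k (2 : k)⁻¹) • Fop k N (i + n + N - 1) v := by
  simp only [Hop_eq k N D hi, Fop_eq k N hn]
  refine (smul_commutator_apply ((superFock k).dilatonVirasoro_lie_dilatonSupercurrent _ hN hi hn)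
    (hb k) v).trans ?_
  rw [mul_assoc]
  rcases eq_or_ne (i - N - 2 * n) 0 with h | h
  · simp only [h, Int.cast_zero, zero_mul, mul_zero, zero_smul]
  · rw [Fop_eq k N (by omega)]
    rfl

theorem Fop_anticommutator_Fop {n m : ℤ} (hn : 0 ≤ n) (hm : 0 ≤ m) (v : SuperSpace k) :
    Fop k N n (Fop k N m v) + Fop k N m (Fop k N n v)
      = (2 * hb k) • Hop k N D (n + m + N) v := by
  simp only [Fop_eq k N hn, Fop_eq k N hm, Hop_eq k N D (show 0 ≤ n + m + N by omega)]
  refine (smul_anticommutator_apply ((superFock k).anticommutator_dilatonSupercurrent _ hN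
    (fun _ => centralTerm_eq_zero k D) hn hm) (hb k) v).trans ?_
  rw [mul_comm]

end SuperVirasoro

theorem statement7_general (k : Type) [Field k] [NeZero (2 : k)] (N : ℤ) (hN : 0 ≤ N)
    (D : ℤ → k) :
    (∀ i j : ℤ, 0 ≤ i → 0 ≤ j → ∀ v : SuperSpace k,
      Hop k N D i (Hop k N D j v) - Hop k N D j (Hop k N D i v)
        = (hb k * ((i - j : ℤ) : R k)) • Hop k N D (i + j + N - 1) v) ∧
    (∀ i n : ℤ, 0 ≤ i → 0 ≤ n → ∀ v : SuperSpace k,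
      Hop k N D i (Fop k N n v) - Fop k N n (Hop k N D i v)
        = (hb k * ((i - N - 2 * n : ℤ) : R k) * cs k (2 : k)⁻¹) •
            Fop k N (i + n + N - 1) v) ∧
    (∀ n m : ℤ, 0 ≤ n → 0 ≤ m → ∀ v : SuperSpace k,
      Fop k N n (Fop k N m v) + Fop k N m (Fop k N n v)
        = (2 * hb k) • Hop k N D (n + m + N) v) :=
  ⟨fun _ _ => Hop_commutator_Hop hN D, fun _ _ => Hop_commutator_Fop hN D,
    fun _ _ => Fop_anticommutator_Fop hN D⟩

/-- For `N ≥ 0` and scalars `D_0, …, D_{N−1}`, the operators `H_i`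
(`i ∈ ℤ_{≥0}`) and `F_r` (`r = n + 1/2 ∈ ℤ_{≥0} + 1/2`) satisfy the Neveu–Schwarz super
Virasoro relations `[H_i, H_j] = ℏ(i−j) H_{i+j+N−1}`,
`[H_i, F_r] = ℏ((i−N+1)/2 − r) F_{i+r+N−1}` and `{F_r, F_s} = 2ℏ H_{r+s+N−1}`
(out-of-range right-hand subscripts only occur with vanishing scalar coefficient). -/
theorem statement7 (N : ℤ) (hN : 0 ≤ N) (D : ℤ → K) :
    (∀ i j : ℤ, 0 ≤ i → 0 ≤ j → ∀ v : SuperSpace K,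
      Hop K N D i (Hop K N D j v) - Hop K N D j (Hop K N D i v)
        = (hb K * ((i - j : ℤ) : R K)) • Hop K N D (i + j + N - 1) v) ∧
    (∀ i n : ℤ, 0 ≤ i → 0 ≤ n → ∀ v : SuperSpace K,
      Hop K N D i (Fop K N n v) - Fop K N n (Hop K N D i v)
        = (hb K * ((i - N - 2 * n : ℤ) : R K) * cs K (2 : K)⁻¹) •
            Fop K N (i + n + N - 1) v) ∧
    (∀ n m : ℤ, 0 ≤ n → 0 ≤ m → ∀ v : SuperSpace K,
      Fop K N n (Fop K N m v) + Fop K N m (Fop K N n v)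
        = (2 * hb K) • Hop K N D (n + m + N) v) :=
  statement7_general K N hN D

end
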